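/- arXiv:2001.00052 — 3 statements merged into one kernel-verified Lean document; each statement's English description precedes it below -/
import Mathlib

section
/- Let G be a residually finite group with center Z(G). Then the intersection of N·Z(G) over all finite-index normal subgroups N of G equals Z(G), and consequently G/Z(G) is residually finite. -/
/-- A group is residually finite if homomorphisms to finite groups separate points. -/
def IsResiduallyFinite (G : Type*) [Group G] : Prop :=
  ∀ g : G, g ≠ 1 → ∃ (F : Type) (_ : Group F) (_ : Finite F) (f : G →* F), f g ≠ 1

/-- A non-central element maps to a non-central element of some finite quotient. -/
theorem exists_noncomm_image {G : Type*} [Group G] (hG : IsResiduallyFinite G)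
    (g : G) (hg : g ∉ Subgroup.center G) :
    ∃ (F : Type) (_ : Group F) (_ : Finite F) (f : G →* F) (h : G), f h * f g ≠ f g * f h := by
  rw [Subgroup.mem_center_iff] at hg
  push Not at hg
  obtain ⟨h, hh⟩ := hg
  obtain ⟨F, i1, i2, f, hf⟩ := hG ((h * g) * (g * h)⁻¹) (fun e => hh (mul_inv_eq_one.mp e))
  refine ⟨F, i1, i2, f, h, fun e => hf ?_⟩
  rw [map_mul, map_inv, map_mul, map_mul, e, mul_inv_cancel]

/-- If `G` is residually finite, then the intersection of `N·Z(G)` over all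
finite-index normal subgroups `N` equals the center `Z(G)`, and `G/Z(G)` is
residually finite. -/
theorem center_inf_and_quotient_rf {G : Type*} [Group G]
    (hG : IsResiduallyFinite G) :
    (⨅ N ∈ {N : Subgroup G | N.Normal ∧ N.FiniteIndex}, N ⊔ Subgroup.center G)
        = Subgroup.center G ∧
      IsResiduallyFinite (G ⧸ Subgroup.center G) := by
  constructor
  · apply le_antisymm
    · intro g hg
      by_contra hc
      obtain ⟨F, i1, i2, f, h, hf⟩ := exists_noncomm_image hG g hc
      have hfin : f.ker.FiniteIndex := inferInstance
      have hm : g ∈ f.ker ⊔ Subgroup.center G := by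
        have h1 := (Subgroup.mem_iInf.mp hg) f.ker
        exact (Subgroup.mem_iInf.mp h1) ⟨inferInstance, hfin⟩
      rw [Subgroup.mem_sup_of_normal_left] at hm
      obtain ⟨n, hn, z, hz, rfl⟩ := hm
      apply hf
      rw [map_mul, MonoidHom.mem_ker.mp hn, one_mul, ← map_mul, ← map_mul,
        Subgroup.mem_center_iff.mp hz h]
    · exact le_iInf₂ fun N _ => le_sup_right
  · intro x hx
    induction x using QuotientGroup.induction_on with
    | H g =>
      have hc : g ∉ Subgroup.center G := fun h => hx ((QuotientGroup.eq_one_iff g).mpr h)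
      obtain ⟨F, i1, i2, f, h, hf⟩ := exists_noncomm_image hG g hc
      let q : G →* f.range ⧸ Subgroup.center f.range :=
        (QuotientGroup.mk' (Subgroup.center f.range)).comp f.rangeRestrict
      have hq : ∀ a ∈ Subgroup.center G, q a = 1 := by
        intro a ha
        refine (QuotientGroup.eq_one_iff (f.rangeRestrict a)).mpr ?_
        rw [Subgroup.mem_center_iff]
        rintro ⟨_, b, rfl⟩
        apply Subtype.ext
        change f b * f a = f a * f b
        rw [← map_mul, ← map_mul, Subgroup.mem_center_iff.mp ha b]
      refine ⟨f.range ⧸ Subgroup.center f.range, inferInstance, inferInstance,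
        QuotientGroup.lift _ q hq, fun e => hf ?_⟩
      have e' : q g = 1 := e
      have h2 := (QuotientGroup.eq_one_iff (f.rangeRestrict g)).mp e'
      exact congrArg Subtype.val (Subgroup.mem_center_iff.mp h2 (f.rangeRestrict h))
end

section
/- Let Γ be a group and N a central subgroup. If there exists g₀ ∈ Γ such that g₀^k ∉ N for all nonzero integers k, then the HNN-extension ⟨Γ, t | t⁻¹Nt = N, id⟩ embeds into the amalgamated free product Γ *_{N=N} Γ via the homomorphism sending t to the copy of g₀ in the second factor and each g ∈ Γ to its copy in the first factor. -/
open Monoid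

section Helpers

variable {Γ : Type*} [Group Γ] {N : Subgroup Γ}

/-- Prepending a nonbase letter to a reduced word. -/
theorem reduced_cons_aux {w : CoprodI.Word (fun _ : Bool => Γ)}
    (hw : PushoutI.Reduced (fun _ : Bool => N.subtype) w) (i : Bool) (g : Γ) (hg : g ∉ N)
    (hi : w.fstIdx ≠ some i) :
    ∃ w' : CoprodI.Word (fun _ : Bool => Γ),
      PushoutI.Reduced (fun _ : Bool => N.subtype) w' ∧ w'.fstIdx = some i ∧
      PushoutI.ofCoprodI (φ := fun _ : Bool => N.subtype) w'.prod =
        PushoutI.of (φ := fun _ : Bool => N.subtype) i g * PushoutI.ofCoprodI w.prod := by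
  have h1 : g ≠ 1 := fun h => hg (h ▸ N.one_mem)
  refine ⟨CoprodI.Word.cons (M := fun _ : Bool => Γ) (i := i) g w hi h1, ?_, ?_, ?_⟩
  · intro x hx
    simp only [CoprodI.Word.cons, List.mem_cons] at hx
    rcases hx with rfl | hx
    · simpa using hg
    · exact hw x hx
  · simp
  · simp

theorem of_eq_of_aux {g : Γ} (hg : g ∈ N) (i j : Bool) :
    PushoutI.of (φ := fun _ : Bool => N.subtype) i g =
      PushoutI.of (φ := fun _ : Bool => N.subtype) j g := by
  have hi := PushoutI.of_apply_eq_base (fun _ : Bool => N.subtype) i ⟨g, hg⟩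
  have hj := PushoutI.of_apply_eq_base (fun _ : Bool => N.subtype) j ⟨g, hg⟩
  exact hi.trans hj.symm

theorem syllable_aux (g₀ : Γ) (hg₀ : ∀ k : ℤ, k ≠ 0 → g₀ ^ k ∉ N)
    {w : CoprodI.Word (fun _ : Bool => Γ)}
    (hw : PushoutI.Reduced (fun _ : Bool => N.subtype) w) (k : ℤ) (hk : k ≠ 0) (g : Γ)
    (hi : w.fstIdx ≠ some false) (hg : g ∈ N → w = .empty) :
    ∃ w' : CoprodI.Word (fun _ : Bool => Γ),
      PushoutI.Reduced (fun _ : Bool => N.subtype) w' ∧ w'.fstIdx = some true ∧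
      PushoutI.ofCoprodI (φ := fun _ : Bool => N.subtype) w'.prod =
        PushoutI.of (φ := fun _ : Bool => N.subtype) true (g₀ ^ k) *
          (PushoutI.of (φ := fun _ : Bool => N.subtype) false g * PushoutI.ofCoprodI w.prod) := by
  by_cases h : g ∈ N
  · obtain rfl := hg h
    obtain ⟨w', h1, h2, h3⟩ := reduced_cons_aux hw true (g₀ ^ k * g)
      (fun hc => hg₀ k hk ((N.mul_mem_cancel_right h).1 hc)) (by simp [CoprodI.Word.fstIdx])
    refine ⟨w', h1, h2, ?_⟩
    rw [h3, of_eq_of_aux h false true, map_mul, mul_assoc]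
  · obtain ⟨w', h1, h2, h3⟩ := reduced_cons_aux hw false g h hi
    obtain ⟨w'', h1', h2', h3'⟩ := reduced_cons_aux h1 true (g₀ ^ k) (hg₀ k hk) (by simp [h2])
    exact ⟨w'', h1', h2', by rw [h3', h3]⟩

/-- The image of a nonempty reduced HNN word (without head). -/
theorem image_aux (hN : N ≤ Subgroup.center Γ)
    (g₀ : Γ) (hg₀ : ∀ k : ℤ, k ≠ 0 → g₀ ^ k ∉ N) (l : List (ℤˣ × Γ)) :
    ∀ (u : ℤˣ) (g : Γ), List.IsChain (fun a b : ℤˣ × Γ => a.2 ∈ N → a.1 = b.1) ((u, g) :: l) →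
    ∃ (n : ℕ) (g' : Γ) (w : CoprodI.Word (fun _ : Bool => Γ)),
      PushoutI.Reduced (fun _ : Bool => N.subtype) w ∧ w.fstIdx ≠ some false ∧
      (g' ∈ N → w = .empty) ∧
      (((u, g) :: l).map (fun x : ℤˣ × Γ =>
        PushoutI.of (φ := fun _ : Bool => N.subtype) true (g₀ ^ (x.1 : ℤ)) *
          PushoutI.of (φ := fun _ : Bool => N.subtype) false x.2)).prod =
        PushoutI.of (φ := fun _ : Bool => N.subtype) true (g₀ ^ ((u : ℤ) * (n + 1))) *
          (PushoutI.of (φ := fun _ : Bool => N.subtype) false g' * PushoutI.ofCoprodI w.prod) := by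
  induction l with
  | nil =>
    intro u g _
    refine ⟨0, g, .empty, ?_, ?_, fun _ => rfl, ?_⟩
    · intro x hx
      simp [CoprodI.Word.empty] at hx
    · simp [CoprodI.Word.fstIdx]
    · simp
  | cons a l ih =>
    obtain ⟨u', h⟩ := a
    intro u g hc
    rw [List.isChain_cons_cons] at hc
    obtain ⟨hc1, hc2⟩ := hc
    obtain ⟨n, g', w, hw, hi, hg', hprod⟩ := ih u' h hc2
    rw [List.map_cons, List.prod_cons, hprod]
    by_cases hg : g ∈ N
    · have huu : u = u' := hc1 hg
      subst huu
      refine ⟨n + 1, g * g', w, hw, hi, fun h => hg' ((N.mul_mem_cancel_left hg).1 h), ?_⟩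
      have hcomm : g * g₀ ^ ((u : ℤ) * (n + 1)) = g₀ ^ ((u : ℤ) * (n + 1)) * g :=
        (Subgroup.mem_center_iff.1 (hN hg) _).symm
      have e : (u : ℤ) * (((n + 1 : ℕ) : ℤ) + 1) = u + (u : ℤ) * (n + 1) := by
        push_cast; ring
      rw [e, zpow_add, map_mul, map_mul _ g g']
      dsimp only
      rw [of_eq_of_aux hg false true]
      simp only [mul_assoc]
      congr 1
      simp only [← mul_assoc]
      rw [← map_mul, ← map_mul, hcomm]
    · obtain ⟨w', h1, h2, h3⟩ := syllable_aux g₀ hg₀ hw ((u' : ℤ) * (n + 1))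
        (mul_ne_zero u'.ne_zero (by positivity)) g' hi hg'
      refine ⟨0, g, w', h1, by simp [h2], fun h => absurd h hg, ?_⟩
      rw [h3]
      simp [mul_assoc]

end Helpers

/-- Lemma (`HNNembeds` (i)): if `N` is a central subgroup of `Γ` and there is
`g₀ ∈ Γ` with `g₀^k ∉ N` for all nonzero integers `k`, then the HNN-extension
`⟨Γ, t | t⁻¹Nt = N, id⟩` embeds into the amalgamated free product `Γ *_{N=N} Γ`
via the homomorphism sending `t` to the copy of `g₀` in the second factor and each
`g ∈ Γ` to its copy in the first factor. -/
theorem hnn_embeds_into_central_amalgam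
    {Γ : Type*} [Group Γ] (N : Subgroup Γ) (hN : N ≤ Subgroup.center Γ)
    (g₀ : Γ) (hg₀ : ∀ k : ℤ, k ≠ 0 → g₀ ^ k ∉ N) :
    ∃ ψ : HNNExtension Γ N N (MulEquiv.refl N) →*
        PushoutI (fun _ : Bool => N.subtype),
      Function.Injective ψ ∧
      (∀ g : Γ, ψ (HNNExtension.of g) = PushoutI.of (φ := fun _ : Bool => N.subtype) false g) ∧
      ψ HNNExtension.t = PushoutI.of (φ := fun _ : Bool => N.subtype) true g₀ := by
  have hinj : ∀ i : Bool, Function.Injective ((fun _ : Bool => N.subtype) i) :=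
    fun _ => N.subtype_injective
  let ψ : HNNExtension Γ N N (MulEquiv.refl N) →* PushoutI (fun _ : Bool => N.subtype) :=
    HNNExtension.lift (PushoutI.of (φ := fun _ : Bool => N.subtype) false)
      (PushoutI.of (φ := fun _ : Bool => N.subtype) true g₀) (by
        intro a
        have hc : g₀ * (a : Γ) = a * g₀ := Subgroup.mem_center_iff.1 (hN a.2) _
        rw [MulEquiv.refl_apply, of_eq_of_aux a.2 false true, ← map_mul, ← map_mul, hc])
  have hψof : ∀ g : Γ, ψ (HNNExtension.of g) =
      PushoutI.of (φ := fun _ : Bool => N.subtype) false g := fun g => by simp [ψ]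
  have hψt : ψ HNNExtension.t = PushoutI.of (φ := fun _ : Bool => N.subtype) true g₀ := by
    simp [ψ]
  refine ⟨ψ, ?_, hψof, hψt⟩
  rw [injective_iff_map_eq_one]
  intro x hx
  obtain ⟨d⟩ := HNNExtension.NormalWord.TransversalPair.nonempty Γ N N
  obtain ⟨w, rfl⟩ : ∃ w : HNNExtension.NormalWord.ReducedWord Γ N N,
      w.prod (MulEquiv.refl N) = x := by
    refine ⟨(x • (HNNExtension.NormalWord.empty : HNNExtension.NormalWord d)).toReducedWord, ?_⟩
    rw [HNNExtension.NormalWord.prod_smul, HNNExtension.NormalWord.prod_empty, mul_one]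
  obtain ⟨g, l, hl⟩ := w
  have hts : ∀ u : ℤˣ, HNNExtension.toSubgroup N N u = N := by
    intro u
    rcases Int.units_eq_one_or u with rfl | rfl <;> rfl
  simp only [hts] at hl
  simp only [HNNExtension.NormalWord.ReducedWord.prod, map_mul, map_list_prod, List.map_map,
    hψof] at hx ⊢
  have hfun : (ψ ∘ fun x : ℤˣ × Γ => HNNExtension.t ^ (x.1 : ℤ) * HNNExtension.of x.2) =
      (fun x : ℤˣ × Γ => PushoutI.of (φ := fun _ : Bool => N.subtype) true (g₀ ^ (x.1 : ℤ)) *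
          PushoutI.of (φ := fun _ : Bool => N.subtype) false x.2) := by
    funext x
    simp [hψof, hψt]
  rw [hfun] at hx
  cases l with
  | nil =>
    have : g = 1 := PushoutI.of_injective hinj false (by simpa using hx)
    simp [this]
  | cons a l =>
    exfalso
    obtain ⟨u, h⟩ := a
    obtain ⟨n, g', w, hw, hi, hg', hprod⟩ := image_aux hN g₀ hg₀ l u h hl
    obtain ⟨w', h1, h2, h3⟩ := syllable_aux g₀ hg₀ hw ((u : ℤ) * (n + 1))
      (mul_ne_zero u.ne_zero (by positivity)) g' hi hg'
    rw [hprod, ← h3] at hx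
    by_cases hg : g ∈ N
    · have := h1.eq_empty_of_mem_range hinj (by
        rw [← inv_eq_iff_mul_eq_one.2 hx]
        refine ⟨⟨g, hg⟩⁻¹, ?_⟩
        rw [map_inv, ← PushoutI.of_apply_eq_base _ false]
        rfl)
      rw [this] at h2
      simp [CoprodI.Word.fstIdx] at h2
    · obtain ⟨w'', k1, k2, k3⟩ := reduced_cons_aux h1 false g hg (by simp [h2])
      have := k1.eq_empty_of_mem_range hinj (by rw [k3, hx]; exact one_mem _)
      rw [this] at k2
      simp [CoprodI.Word.fstIdx] at k2
end

section
/- Let G be a countable discrete group and C a normal subgroup with G/C amenable, and let λ be a one-dimensional unitary character of C. Let Φ : C*(G) → A be a unital completely positive map into a unital C*-algebra with Φ(c) = λ(c)·1 for all c ∈ C. Then ‖Φ(f)‖ ≤ ‖Λ_{λ̃}(f)‖ for all f ∈ C*(G), where Λ_{λ̃} is the GNS representation of C*(G) associated to the extension by zero λ̃ of λ. -/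
open Filter
open scoped InnerProductSpace Classical

/-- A function `φ : G → ℂ` is positive definite if for every finite tuple of group
elements the matrix `[φ (s⁻¹ * t)]` is positive semidefinite. -/
def IsPositiveDefinite {G : Type*} [Group G] (φ : G → ℂ) : Prop :=
  ∀ (n : ℕ) (v : Fin n → G),
    letI := Complex.partialOrder
    Matrix.PosSemidef (Matrix.of fun i j : Fin n => φ ((v i)⁻¹ * v j))

theorem aux_homcont {CG B : Type*} [CStarAlgebra CG] [CStarAlgebra B] (Λ : CG →⋆ₐ[ℂ] B) :
    Continuous Λ :=
  AddMonoidHomClass.continuous_of_bound Λ 1 fun x => by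
    simpa using NonUnitalStarAlgHom.norm_apply_le (Λ : CG →⋆ₙₐ[ℂ] B) x

theorem aux_core {CG A B : Type*} [CStarAlgebra CG] [CStarAlgebra A] [CStarAlgebra B]
    [PartialOrder A] [StarOrderedRing A]
    (Λ : CG →⋆ₐ[ℂ] B) (Ψ : CG →ₗ[ℂ] A) (h1 : Ψ 1 = 1)
    (hKS : ∀ f, star (Ψ f) * Ψ f ≤ Ψ (star f * f))
    (hker : ∀ f, Λ f = 0 → Ψ f = 0) (f : CG) : ‖Ψ f‖ ≤ ‖Λ f‖ := by
  let _ : PartialOrder CG := CStarAlgebra.spectralOrder CG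
  have _ : StarOrderedRing CG := CStarAlgebra.spectralOrderedRing CG
  let _ : PartialOrder B := CStarAlgebra.spectralOrder B
  have _ : StarOrderedRing B := CStarAlgebra.spectralOrderedRing B
  have hpos : ∀ x : CG, 0 ≤ x → 0 ≤ Ψ x := by
    intro x hx
    obtain ⟨b, rfl⟩ := CStarAlgebra.nonneg_iff_eq_star_mul_self.1 hx
    exact (star_mul_self_nonneg _).trans (hKS b)
  set t : ℝ := ‖Λ f‖ ^ 2 with ht
  set h : CG := star f * f with hh
  have hsa : IsSelfAdjoint h := IsSelfAdjoint.star_mul_self f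
  set p : CG := cfc (fun x : ℝ => max (x - t) 0) h with hp
  have hsaΛ : IsSelfAdjoint (Λ h) := hsa.map Λ
  have hΛp : Λ p = 0 := by
    have hc : Continuous Λ := map_continuous Λ
    rw [hp, StarAlgHom.map_cfc (S := ℂ) Λ _ h (by fun_prop) hc hsa hsaΛ]
    have hle : Λ h ≤ algebraMap ℝ B t := by
      have := CStarAlgebra.star_mul_le_algebraMap_norm_sq (a := Λ f)
      rw [hh, map_mul, map_star]
      exact this
    rw [← cfc_zero ℝ (Λ h)]
    refine cfc_congr ?_
    intro x hx
    have := (le_algebraMap_iff_spectrum_le (R := ℝ) (a := Λ h) (r := t) hsaΛ).1 hle x hx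
    simp [this]
  have hle : 0 ≤ algebraMap ℝ CG t + p - h := by
    rw [sub_nonneg]
    have e1 : algebraMap ℝ CG t + p = cfc (fun x : ℝ => t + max (x - t) 0) h := by
      rw [cfc_add (R := ℝ) h (fun _ => t) (fun x => max (x - t) 0), cfc_const t h hsa]
    rw [e1]
    conv_lhs => rw [← cfc_id ℝ h hsa]
    refine cfc_mono (fun x _ => ?_)
    have := le_max_left (x - t) 0
    simp only [id]; linarith
  have h2 := hpos _ hle
  have e2 : Ψ (algebraMap ℝ CG t) = algebraMap ℝ A t := by
    rw [IsScalarTower.algebraMap_apply ℝ ℂ CG, IsScalarTower.algebraMap_apply ℝ ℂ A,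
      Algebra.algebraMap_eq_smul_one (A := CG), Algebra.algebraMap_eq_smul_one (A := A),
      map_smul, h1]
  rw [map_sub, map_add, hker p hΛp, add_zero, e2, sub_nonneg] at h2
  have h3 : star (Ψ f) * Ψ f ≤ algebraMap ℝ A t := (hKS f).trans h2
  have h4 := (CStarAlgebra.norm_le_iff_le_algebraMap _ (by positivity)
    (star_mul_self_nonneg (Ψ f))).2 h3
  rw [CStarRing.norm_star_mul_self] at h4
  exact le_of_sq_le_sq (by rw [← ht]; linarith [sq ‖Ψ f‖]) (norm_nonneg _)

/-- Kadison--Schwarz from a Gram factorization. -/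
theorem aux_KS {A K : Type*} [Fintype K] [CStarAlgebra A] 
    [PartialOrder A] [StarOrderedRing A] (T S : K → A)
    (hT : ∑ k, star (T k) * T k = 1) :
    star (∑ k, star (T k) * S k) * (∑ k, star (T k) * S k) ≤ ∑ k, star (S k) * S k := by
  set X := ∑ k, star (T k) * S k with hX
  have hX' : star X = ∑ k, star (S k) * T k := by simp [hX]
  have h : 0 ≤ ∑ k, star (S k - T k * X) * (S k - T k * X) :=
    Finset.sum_nonneg fun k _ => star_mul_self_nonneg _
  have e : ∑ k, star (S k - T k * X) * (S k - T k * X) =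
      ∑ k, star (S k) * S k - (∑ k, star (S k) * T k) * X
        - star X * (∑ k, star (T k) * S k) + star X * (∑ k, star (T k) * T k) * X := by
    simp only [Finset.sum_mul, Finset.mul_sum, ← Finset.sum_sub_distrib, ← Finset.sum_add_distrib]
    refine Finset.sum_congr rfl fun k _ => ?_
    simp only [star_sub, star_mul]
    noncomm_ring
  rw [e, hT, ← hX', ← hX] at h
  simpa using h

theorem aux_gram {G CG A : Type*} [Group G] [CStarAlgebra CG] [CStarAlgebra A]
    (ι : G →* unitary CG) (Φ : CG →ₗ[ℂ] A)
    (hΦcp : ∀ (n : ℕ) (y : Matrix (Fin n) (Fin n) CG),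
      ∃ z : Matrix (Fin n) (Fin n) A, (star y * y).map Φ = star z * z)
    (n : ℕ) (v : Fin (n+1) → G) : ∃ z : Matrix (Fin (n+1)) (Fin (n+1)) A,
      ∀ i j, Φ (ι ((v i)⁻¹ * v j) : CG) = ∑ k, star (z k i) * z k j := by
  obtain ⟨z, hz⟩ := hΦcp (n+1) (Matrix.of fun k j => if k = 0 then (ι (v j) : CG) else 0)
  refine ⟨z, fun i j => ?_⟩
  have := congrFun (congrFun hz i) j
  simp only [Matrix.map_apply, Matrix.mul_apply, Matrix.star_apply, Matrix.of_apply] at this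
  rw [← this]
  congr 1
  rw [Finset.sum_eq_single 0]
  · simp [map_mul, map_inv, ← Unitary.star_eq_inv]
  · intro k _ hk; simp [hk]
  · simp

theorem aux_char {G CG A : Type*} [Group G] [CStarAlgebra CG] [CStarAlgebra A]
    (C : Subgroup G) (lam : C →* ℂ) (hlam : ∀ c : C, ‖lam c‖ = 1)
    (ι : G →* unitary CG) (Φ : CG →ₗ[ℂ] A) (hΦ1 : Φ 1 = 1)
    (hΦcp : ∀ (n : ℕ) (y : Matrix (Fin n) (Fin n) CG),
      ∃ z : Matrix (Fin n) (Fin n) A, (star y * y).map Φ = star z * z)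
    (hΦC : ∀ c : C, Φ (ι (c : G) : CG) = lam c • (1 : A)) (g : G) (c : C) :
    Φ (ι (g * c) : CG) = lam c • Φ (ι g : CG) := by
  let _ : PartialOrder A := CStarAlgebra.spectralOrder A
  have _ : StarOrderedRing A := CStarAlgebra.spectralOrderedRing A
  obtain ⟨z, hz⟩ := aux_gram ι Φ hΦcp 2 ![1, c, g⁻¹]
  have h00 := hz 0 0
  have h01 := hz 0 1
  have h10 := hz 1 0
  have h11 := hz 1 1
  have h20 := hz 2 0
  have h21 := hz 2 1
  have hinv : Φ (ι ((c : G)⁻¹) : CG) = star (lam c) • (1 : A) := by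
    have := hΦC c⁻¹
    rw [Subgroup.coe_inv] at this
    rw [this]
    congr 1
    have h : lam c⁻¹ * lam c = 1 := by rw [← map_mul]; simp
    have h' : star (lam c) * lam c = 1 := by
      have := Complex.conj_mul' (lam c)
      simpa [hlam] using this
    have hne : lam c ≠ 0 := fun h0 => by simp [h0] at h
    exact mul_right_cancel₀ hne (h.trans h'.symm)
  have hcc : lam c * star (lam c) = 1 := by
    have := Complex.mul_conj' (lam c)
    simpa [hlam] using this
  simp only [Matrix.cons_val, Matrix.cons_val_zero, Matrix.cons_val_one, inv_one, one_mul, mul_one,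
    map_one, OneMemClass.coe_one, hΦ1, inv_mul_cancel, inv_inv, hΦC, hinv] at h00 h01 h10 h11 h20 h21
  have hzero : ∑ k, star (z k 1 - lam c • z k 0) * (z k 1 - lam c • z k 0) = 0 := by
    have e : ∑ k, star (z k 1 - lam c • z k 0) * (z k 1 - lam c • z k 0) =
        ∑ k, star (z k 1) * z k 1 - lam c • ∑ k, star (z k 1) * z k 0
         - star (lam c) • ∑ k, star (z k 0) * z k 1
         + (lam c * star (lam c)) • ∑ k, star (z k 0) * z k 0 := by
      simp only [Finset.smul_sum, ← Finset.sum_sub_distrib, ← Finset.sum_add_distrib]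
      refine Finset.sum_congr rfl fun k _ => ?_
      simp only [star_sub, star_smul, sub_mul, mul_sub, smul_mul_assoc, mul_smul_comm, smul_sub, mul_smul]
      abel
    rw [e, ← h00, ← h01, ← h10, ← h11, smul_smul, smul_smul, mul_comm (star (lam c)), hcc]
    simp
  rw [Finset.sum_eq_zero_iff_of_nonneg (fun _ _ => star_mul_self_nonneg _)] at hzero
  have hk : ∀ k, z k 1 = lam c • z k 0 := fun k =>
    sub_eq_zero.1 ((CStarRing.star_mul_self_eq_zero_iff _).1 (hzero k (Finset.mem_univ _)))
  rw [h21, h20, Finset.smul_sum]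
  simp [hk]

theorem aux_span {G CG A : Type*} [Group G] [CStarAlgebra CG] [CStarAlgebra A]
    [PartialOrder A] [StarOrderedRing A]
    (ι : G →* unitary CG) (Φ Ψ : CG →ₗ[ℂ] A) (hΦ1 : Φ 1 = 1)
    (hΦcp : ∀ (n : ℕ) (y : Matrix (Fin n) (Fin n) CG),
      ∃ z : Matrix (Fin n) (Fin n) A, (star y * y).map Φ = star z * z)
    (φ : G → ℂ) (hφ : ∀ (n : ℕ) (v : Fin n → G), ∃ m : Matrix (Fin n) (Fin n) ℂ,
      ∀ i j, φ ((v i)⁻¹ * v j) = ∑ k, star (m k i) * m k j) (hφ1 : φ 1 = 1)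
    (hΨ : ∀ g, Ψ (ι g : CG) = φ g • Φ (ι g : CG))
    (f : CG) (hf : f ∈ Submodule.span ℂ (Set.range fun g : G => (ι g : CG))) :
    star (Ψ f) * Ψ f ≤ Ψ (star f * f) := by
  obtain ⟨n, a, s, rfl⟩ := Submodule.mem_span_set'.1 hf
  choose w hw using fun i => (s i).2
  simp only at hw
  obtain ⟨z, hz⟩ := aux_gram ι Φ hΦcp n (Fin.cons 1 w)
  obtain ⟨m, hm⟩ := hφ (n+1) (Fin.cons 1 w)
  set v : Fin (n+1) → G := Fin.cons 1 w with hv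
  set T : Fin (n+1) → Fin (n+1) × Fin (n+1) → A := fun i k => m k.2 i • z k.1 i with hT
  have hG : ∀ i j, Ψ (ι ((v i)⁻¹ * v j) : CG) = ∑ k, star (T i k) * T j k := by
    intro i j
    rw [hΨ, hz, hm, Fintype.sum_prod_type, Finset.smul_sum]
    refine Finset.sum_congr rfl fun k _ => ?_
    rw [Finset.sum_smul]
    refine Finset.sum_congr rfl fun l _ => ?_
    simp only [hT, star_smul, smul_mul_assoc, mul_smul_comm, smul_smul]
    rw [mul_comm (star (m l i))]
  have h00 : ∑ k, star (T 0 k) * T 0 k = 1 := by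
    rw [← hG, hΨ, inv_mul_cancel, hφ1]; simp [hΦ1]
  have key := aux_KS (T 0) (fun k => ∑ i, a i • T (Fin.succ i) k) h00
  have e1 : ∑ k, star (T 0 k) * (∑ i, a i • T (Fin.succ i) k) = Ψ (∑ i, a i • (s i : CG)) := by
    simp only [Finset.mul_sum, mul_smul_comm]
    rw [Finset.sum_comm, map_sum]
    refine Finset.sum_congr rfl fun i _ => ?_
    rw [← Finset.smul_sum, ← hG, map_smul, ← hw]
    simp [hv]
  have e2 : ∑ k, star (∑ i, a i • T (Fin.succ i) k) * (∑ i, a i • T (Fin.succ i) k) =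
      Ψ (star (∑ i, a i • (s i : CG)) * ∑ i, a i • (s i : CG)) := by
    simp only [star_sum, Finset.mul_sum, Finset.sum_mul, mul_smul_comm, star_smul, smul_mul_assoc,
      map_sum, map_smul]
    rw [Finset.sum_comm]
    refine Finset.sum_congr rfl fun j _ => ?_
    rw [← Finset.smul_sum, Finset.sum_comm]
    congr 1
    refine Finset.sum_congr rfl fun i _ => ?_
    simp only [← Finset.smul_sum]
    rw [← hG, ← hw i, ← hw j]
    simp [hv, ← Unitary.star_eq_inv]
  rw [e1, e2] at key
  exact key

theorem aux_map {G CG A : Type*} [Group G] [CStarAlgebra CG] [CStarAlgebra A]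
    (C : Subgroup G) [C.Normal] (lam : C →* ℂ)
    (ι : G →* unitary CG) (Φ : CG →ₗ[ℂ] A)
    (hchar : ∀ (g : G) (c : C), Φ (ι (g * c) : CG) = lam c • Φ (ι g : CG))
    {Hlam : Type*} [NormedAddCommGroup Hlam] [InnerProductSpace ℂ Hlam] [CompleteSpace Hlam]
    (Λ : CG →⋆ₐ[ℂ] (Hlam →L[ℂ] Hlam)) (ξ : Hlam)
    (hgns : ∀ g : G, ⟪ξ, Λ (ι g) ξ⟫_ℂ = if h : g ∈ C then lam ⟨g, h⟩ else 0)
    (φ : G ⧸ C → ℂ) (hfin : (Function.support φ).Finite) :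
    ∃ Ψ : CG →ₗ[ℂ] A, Continuous Ψ ∧
      (∀ g : G, Ψ (ι g : CG) = φ (g : G ⧸ C) • Φ (ι g : CG)) ∧ ∀ f, Λ f = 0 → Ψ f = 0 := by
  have hc : Continuous Λ := aux_homcont Λ
  let Ψ : CG →ₗ[ℂ] A :=
    { toFun := fun f => ∑ x ∈ hfin.toFinset,
        (φ x * ⟪Λ (ι x.out) ξ, Λ f ξ⟫_ℂ) • Φ (ι x.out : CG)
      map_add' := fun f g => by
        simp [inner_add_right, mul_add, add_smul, Finset.sum_add_distrib]
      map_smul' := fun a f => by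
        simp only [map_smul, ContinuousLinearMap.smul_apply, inner_smul_right, Finset.smul_sum,
          smul_smul, RingHom.id_apply]
        refine Finset.sum_congr rfl fun x _ => ?_
        congr 1; ring }
  refine ⟨Ψ, ?_, ?_, ?_⟩
  · change Continuous fun f => ∑ x ∈ hfin.toFinset,
        (φ x * ⟪Λ (ι x.out) ξ, Λ f ξ⟫_ℂ) • Φ (ι x.out : CG)
    fun_prop
  · intro g
    change ∑ x ∈ hfin.toFinset,
        (φ x * ⟪Λ (ι x.out) ξ, Λ (ι g) ξ⟫_ℂ) • Φ (ι x.out : CG) = _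
    have hin : ∀ x : G ⧸ C, ⟪Λ (ι x.out) ξ, Λ (ι g) ξ⟫_ℂ =
        if h : x.out⁻¹ * g ∈ C then lam ⟨x.out⁻¹ * g, h⟩ else 0 := by
      intro x
      rw [← hgns, map_mul, map_inv, ← Unitary.star_eq_inv]
      simp only [Submonoid.coe_mul, Unitary.coe_star, map_mul, map_star]
      rw [ContinuousLinearMap.mul_apply, ContinuousLinearMap.star_eq_adjoint,
        ContinuousLinearMap.adjoint_inner_right]
    have hmem : ∀ x : G ⧸ C, x.out⁻¹ * g ∈ C ↔ x = (g : G ⧸ C) := by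
      intro x
      rw [← QuotientGroup.eq, QuotientGroup.out_eq']
    rw [Finset.sum_eq_single (g : G ⧸ C)]
    · have h := (hmem g).2 rfl
      rw [hin, dif_pos h, mul_smul, ← hchar]
      simp
    · intro x _ hx
      rw [hin, dif_neg (fun h => hx ((hmem x).1 h))]
      simp
    · intro h
      simp only [Set.Finite.mem_toFinset, Function.mem_support, not_not] at h
      simp [h]
  · intro f hf
    change ∑ x ∈ hfin.toFinset,
        (φ x * ⟪Λ (ι x.out) ξ, Λ f ξ⟫_ℂ) • Φ (ι x.out : CG) = 0
    simp [hf]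

theorem aux_cont {CG A : Type*} [CStarAlgebra CG] [CStarAlgebra A] (Φ : CG →ₗ[ℂ] A)
    (hΦcp : ∀ (n : ℕ) (y : Matrix (Fin n) (Fin n) CG),
      ∃ z : Matrix (Fin n) (Fin n) A, (star y * y).map Φ = star z * z) : Continuous Φ := by
  let _ : PartialOrder CG := CStarAlgebra.spectralOrder CG
  have _ : StarOrderedRing CG := CStarAlgebra.spectralOrderedRing CG
  let _ : PartialOrder A := CStarAlgebra.spectralOrder A
  have _ : StarOrderedRing A := CStarAlgebra.spectralOrderedRing A
  have hpos : ∀ x : CG, 0 ≤ x → 0 ≤ Φ x := by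
    intro x hx
    obtain ⟨b, rfl⟩ := CStarAlgebra.nonneg_iff_eq_star_mul_self.1 hx
    obtain ⟨z, hz⟩ := hΦcp 1 (Matrix.of fun _ _ => b)
    have := congrFun (congrFun hz 0) 0
    simp [Matrix.mul_apply, Matrix.star_apply] at this
    rw [this]
    exact star_mul_self_nonneg _
  obtain ⟨K, hK⟩ := (PositiveLinearMap.mk₀ Φ hpos).exists_norm_apply_le
  exact AddMonoidHomClass.continuous_of_bound Φ K hK

theorem aux_psd {n : ℕ} (M : Matrix (Fin n) (Fin n) ℂ)
    (hM : letI := Complex.partialOrder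
      M.PosSemidef) :
    ∃ m : Matrix (Fin n) (Fin n) ℂ, ∀ i j, M i j = ∑ k, star (m k i) * m k j := by
  open scoped ComplexOrder MatrixOrder Matrix.Norms.L2Operator in
  obtain ⟨B, hB⟩ := CStarAlgebra.nonneg_iff_eq_star_mul_self.mp (Matrix.PosSemidef.nonneg hM)
  refine ⟨B, fun i j => ?_⟩
  rw [hB]
  simp [Matrix.mul_apply, Matrix.star_apply]

/-- Theorem (`factorization`): let `G` be a countable discrete group, `C` a normal
subgroup with `G/C` amenable, and `λ` a one-dimensional unitary character of `C`.
For every unital completely positive map `Φ` from the full group C*-algebra `C*(G)`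
(encoded by its universal property) into a unital C*-algebra `A` with
`Φ(c) = λ(c)·1` for `c ∈ C`, one has `‖Φ(f)‖ ≤ ‖Λ_{λ̃}(f)‖` for all `f ∈ C*(G)`,
where `Λ_{λ̃}` is the GNS representation associated with the extension by zero `λ̃`
of `λ`. -/
theorem ucp_dominated_by_gns_of_induced_character
    {G : Type*} [Group G] [Countable G] (C : Subgroup G) [C.Normal]
    (lam : C →* ℂ) (hlam : ∀ c : C, ‖lam c‖ = 1)
    -- amenability of `G/C`: finitely supported positive-definite functions
    -- converge pointwise to `1`
    (hamen : ∃ φ : ℕ → (G ⧸ C → ℂ),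
      (∀ n, IsPositiveDefinite (φ n) ∧ (Function.support (φ n)).Finite ∧ φ n 1 = 1) ∧
      ∀ x : G ⧸ C, Tendsto (fun n => φ n x) atTop (nhds 1))
    -- the full group C*-algebra `CG = C*(G)`, via its universal property
    {CG : Type*} [CStarAlgebra CG] (ι : G →* unitary CG)
    (hdense : (Submodule.span ℂ (Set.range fun g : G => (ι g : CG))).topologicalClosure = ⊤)
    (huniv : ∀ (D : Type) (_ : CStarAlgebra D) (v : G →* unitary D),
      ∃ ψ : CG →⋆ₐ[ℂ] D, ∀ g : G, ψ (ι g) = v g)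
    -- GNS representation of the state extending `λ` by zero
    {Hlam : Type*} [NormedAddCommGroup Hlam] [InnerProductSpace ℂ Hlam] [CompleteSpace Hlam]
    (Λ : CG →⋆ₐ[ℂ] (Hlam →L[ℂ] Hlam)) (ξ : Hlam) (hξ : ‖ξ‖ = 1)
    (hcyc : (Submodule.span ℂ (Set.range fun a : CG => Λ a ξ)).topologicalClosure = ⊤)
    (hgns : ∀ g : G, ⟪ξ, Λ (ι g) ξ⟫_ℂ = if h : g ∈ C then lam ⟨g, h⟩ else 0)
    -- a unital completely positive map `Φ : C*(G) → A` with `Φ(c) = λ(c)·1`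
    {A : Type*} [CStarAlgebra A] (Φ : CG →ₗ[ℂ] A) (hΦ1 : Φ 1 = 1)
    (hΦcp : ∀ (n : ℕ) (y : Matrix (Fin n) (Fin n) CG),
      ∃ z : Matrix (Fin n) (Fin n) A, (star y * y).map Φ = star z * z)
    (hΦC : ∀ c : C, Φ (ι (c : G) : CG) = lam c • (1 : A)) :
    ∀ f : CG, ‖Φ f‖ ≤ ‖Λ f‖ := by
  let _ : PartialOrder A := CStarAlgebra.spectralOrder A
  have _ : StarOrderedRing A := CStarAlgebra.spectralOrderedRing A
  obtain ⟨φ, hφ, hlim⟩ := hamen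
  have hchar := aux_char C lam hlam ι Φ hΦ1 hΦcp hΦC
  set V := Submodule.span ℂ (Set.range fun g : G => (ι g : CG)) with hV
  have hdense' : Dense (V : Set CG) := Submodule.dense_iff_topologicalClosure_eq_top.2 hdense
  choose Ψ hΨc hΨg hΨk using fun n => aux_map C lam ι Φ hchar Λ ξ hgns (φ n) (hφ n).2.1
  have hΨ1 : ∀ n, Ψ n 1 = 1 := by
    intro n
    have := hΨg n 1
    simpa [hΦ1, (hφ n).2.2] using this
  have hKS : ∀ n f, star (Ψ n f) * Ψ n f ≤ Ψ n (star f * f) := by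
    intro n f
    have hcl : IsClosed {f : CG | star (Ψ n f) * Ψ n f ≤ Ψ n (star f * f)} := by
      have := hΨc n
      exact isClosed_le (by fun_prop) (by fun_prop)
    refine hdense'.induction (P := fun f => star (Ψ n f) * Ψ n f ≤ Ψ n (star f * f)) ?_ hcl f
    intro f hf
    refine aux_span ι Φ (Ψ n) hΦ1 hΦcp (fun g => φ n (g : G ⧸ C)) ?_ (hφ n).2.2 (hΨg n) f hf
    intro k v
    obtain ⟨m, hm⟩ := aux_psd _ ((hφ n).1 k (fun i => (v i : G ⧸ C)))
    refine ⟨m, fun i j => ?_⟩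
    rw [← hm i j]
    simp
  have hbd : ∀ n f, ‖Ψ n f‖ ≤ ‖Λ f‖ := fun n f =>
    aux_core Λ (Ψ n) (hΨ1 n) (hKS n) (hΨk n) f
  have hconv : ∀ f ∈ V, Tendsto (fun n => Ψ n f) atTop (nhds (Φ f)) := by
    intro f hf
    induction hf using Submodule.span_induction with
    | mem x hx =>
      obtain ⟨g, rfl⟩ := hx
      simp only [hΨg]
      simpa using (hlim (g : G ⧸ C)).smul_const (Φ (ι g : CG))
    | zero => simp
    | add x y _ _ hx hy => simpa using hx.add hy
    | smul a x _ hx => simpa using hx.const_smul a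
  have hΦc : Continuous Φ := aux_cont Φ hΦcp
  have hΛc : Continuous Λ := aux_homcont Λ
  intro f
  refine hdense'.induction (P := fun f => ‖Φ f‖ ≤ ‖Λ f‖) ?_ (isClosed_le (by fun_prop) (by fun_prop)) f
  intro f hf
  exact le_of_tendsto (hconv f hf).norm (Eventually.of_forall fun n => hbd n f)
end
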